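/- Let l ≥ -1/2 be real. Define U₀(x,t) = C₀²·x^{l+1}·t^{l+1} with C₀ = Γ(1/2)Γ(l+1)/(2^{l+3/2}Γ(l+3/2)²), and for each integer n ≥ 1 define U_{4n-1}(x,t) = Σ_{k even, 0 ≤ k ≤ 2n} C(2n,k) · [Γ(n+(1-k)/2)·Γ((k+1)/2)·Γ(l+1)² / (2^{2l+3}·Γ(l+3/2)²·Γ(n+l+(3-k)/2)·Γ(l+(k+3)/2))] · x^{2n-k+l+1}·t^{k+l+1}. Then each of the functions U ∈ {U₀, U_{4n-1} : n ≥ 1} satisfies ∂²U/∂x² - ∂²U/∂t² - (l(l+1)/x²)·U + (l(l+1)/t²)·U = 0 for all x > 0, t > 0, and satisfies the boundary conditions lim_{x→0⁺} U(x,t) = 0 and lim_{t→0⁺} U(x,t) = 0. -/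

import Mathlib

/-!
Let `B_l = d²/dx² - l(l+1)/x²`. The operator `Y_l` maps the monomial `x^m` to a multiple `φ_m` of
`x^{m+l+1}`, and the Gamma factors are such that it intertwines `B_l` with the second derivative:
`B_l φ_m = m(m-1) φ_{m-2}`. Since `U_{4n-1} = ∑_k C(2n,k) φ_{2n-k}(x) φ_k(t)` over even `k`, the
equation `B_l^x U = B_l^t U` reduces, after the shift `k ↦ k + 2`, to the binomial identity which
says that `p_{4n-1} = ∑_k C(2n,k) x^{2n-k} t^k` solves the wave equation. The functions `φ_m`,
`m ≥ 0`, vanish at `0⁺` as soon as `l > -1`. Finally `U₀` is the case `n = 0` of the formula for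
`U_{4n-1}`.
-/

/-- The generalized wave polynomial `U₀(x,t) = C₀² x^{l+1} t^{l+1}` with
`C₀ = Γ(1/2)Γ(l+1)/(2^{l+3/2}Γ(l+3/2)²)`. -/
noncomputable def genWaveU0 (l : ℝ) (x t : ℝ) : ℝ :=
  (Real.Gamma (1/2) * Real.Gamma (l + 1) / (2 ^ (l + 3/2) * Real.Gamma (l + 3/2) ^ 2)) ^ 2 *
    x ^ (l + 1) * t ^ (l + 1)

/-- The generalized wave polynomial `U_{4n-1}` (sum over even `k = 2j`, `0 ≤ j ≤ n`). -/
noncomputable def genWaveU4 (l : ℝ) (n : ℕ) (x t : ℝ) : ℝ :=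
  ∑ j ∈ Finset.range (n + 1),
    (Nat.choose (2 * n) (2 * j) : ℝ) *
      (Real.Gamma ((n : ℝ) + (1 - 2 * (j : ℝ)) / 2) * Real.Gamma ((2 * (j : ℝ) + 1) / 2) *
          Real.Gamma (l + 1) ^ 2 /
        (2 ^ (2 * l + 3) * Real.Gamma (l + 3/2) ^ 2 *
          Real.Gamma ((n : ℝ) + l + (3 - 2 * (j : ℝ)) / 2) *
          Real.Gamma (l + (2 * (j : ℝ) + 3) / 2))) *
      x ^ (2 * (n : ℝ) - 2 * (j : ℝ) + l + 1) * t ^ (2 * (j : ℝ) + l + 1)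

/-- `U` solves the singular hyperbolic equation
`U_{xx} - U_{tt} - (l(l+1)/x²)U + (l(l+1)/t²)U = 0` for `x, t > 0` and vanishes as
`x → 0⁺` or `t → 0⁺`. -/
def SolvesSingularWaveEq (l : ℝ) (U : ℝ → ℝ → ℝ) : Prop :=
  (∀ x t : ℝ, 0 < x → 0 < t →
    DifferentiableAt ℝ (fun y => U y t) x ∧
    DifferentiableAt ℝ (deriv fun y => U y t) x ∧
    DifferentiableAt ℝ (fun s => U x s) t ∧
    DifferentiableAt ℝ (deriv fun s => U x s) t ∧
    deriv (deriv fun y => U y t) x - deriv (deriv fun s => U x s) t -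
        l * (l + 1) / x ^ 2 * U x t + l * (l + 1) / t ^ 2 * U x t = 0) ∧
  (∀ t : ℝ, 0 < t →
    Filter.Tendsto (fun x => U x t) (nhdsWithin 0 (Set.Ioi 0)) (nhds 0)) ∧
  (∀ x : ℝ, 0 < x →
    Filter.Tendsto (fun t => U x t) (nhdsWithin 0 (Set.Ioi 0)) (nhds 0))

open Filter Finset Topology

lemma cast_choose_add_two_mul {R : Type*} [CommRing R] (n k : ℕ) :
    (n.choose (k + 2) : R) * ((k + 2) * (k + 1)) = n.choose k * ((n - k) * (n - k - 1)) := by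
  have cast_choose_succ_mul (i : ℕ) :
      (n.choose (i + 1) : R) * (i + 1) = n.choose i * (n - i) := by
    rcases le_or_gt i n with hi | hi
    · rw [← Nat.cast_sub hi]
      exact_mod_cast congrArg (Nat.cast : ℕ → R) (Nat.choose_succ_right_eq n i)
    · simp [Nat.choose_eq_zero_of_lt hi, Nat.choose_eq_zero_of_lt (hi.trans i.lt_succ_self)]
  have h₁ := cast_choose_succ_mul k
  have h₂ := cast_choose_succ_mul (k + 1)
  push_cast at h₂
  linear_combination (k + 1 : R) * h₂ + (n - k - 1 : R) * h₁

/-- For `F a b = x ^ a * t ^ b` this is the wave equation for `p_{4n-1}`. -/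
lemma sum_choose_two_mul_shift {R : Type*} [CommRing R] (F : R → R → R) (n : ℕ) :
    ∑ j ∈ range (n + 1), ((2 * n).choose (2 * j) : R) *
        ((2 * n - 2 * j) * (2 * n - 2 * j - 1) * F (2 * n - 2 * j - 2) (2 * j)) =
      ∑ j ∈ range (n + 1), ((2 * n).choose (2 * j) : R) *
        (2 * j * (2 * j - 1) * F (2 * n - 2 * j) (2 * j - 2)) := by
  rw [sum_range_succ, sum_range_succ' _ n]
  congr 1
  · refine sum_congr rfl fun j _ => ?_
    have h := cast_choose_add_two_mul (R := R) (2 * n) (2 * j)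
    have hx : (2 * n - 2 * (j + 1) : R) = 2 * n - 2 * j - 2 := by ring
    have ht : (2 * (j + 1) - 2 : R) = 2 * j := by ring
    push_cast at h ⊢
    rw [hx, ht, mul_add_one]
    linear_combination -F (2 * n - 2 * j - 2) (2 * j) * h
  · simp

/-- The singular Bessel operator `B_l = d²/dx² - l(l+1)/x²`. -/
noncomputable def besselOp (l : ℝ) (f : ℝ → ℝ) (x : ℝ) : ℝ :=
  iteratedDeriv 2 f x - l * (l + 1) / x ^ 2 * f x

lemma besselOp_const_mul (l c : ℝ) (f : ℝ → ℝ) (x : ℝ) :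
    besselOp l (fun y => c * f y) x = c * besselOp l f x := by
  rw [besselOp, besselOp, iteratedDeriv_const_mul_field]
  ring

lemma besselOp_sum_const_mul {ι : Type*} {s : Finset ι} {f : ι → ℝ → ℝ} {x : ℝ}
    (hf : ∀ i ∈ s, ContDiffAt ℝ 2 (f i) x) (l : ℝ) (c : ι → ℝ) :
    besselOp l (fun y => ∑ i ∈ s, c i * f i y) x = ∑ i ∈ s, c i * besselOp l (f i) x := by
  simp only [← besselOp_const_mul]
  simp only [besselOp]
  rw [iteratedDeriv_fun_sum fun i hi => contDiffAt_const.mul (hf i hi), mul_sum,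
    sum_sub_distrib]

lemma besselOp_rpow {x : ℝ} (hx : x ≠ 0) (l m : ℝ) :
    besselOp l (fun y => y ^ (m + l + 1)) x = m * (m + 2 * l + 1) * x ^ (m - 2 + l + 1) := by
  have hderiv : iteratedDeriv 2 (fun y : ℝ => y ^ (m + l + 1)) x =
      (m + l + 1) * (m + l) * x ^ (m - 2 + l + 1) := by
    rw [iteratedDeriv_eq_iterate, Real.iter_deriv_rpow_const,
      descPochhammer_eval_eq_prod_range, prod_range_succ, prod_range_one]
    push_cast
    ring_nf
  have hpow : x ^ (m + l + 1) = x ^ (m - 2 + l + 1) * x ^ 2 := by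
    rw [← Real.rpow_add_natCast hx]
    push_cast
    ring_nf
  rw [besselOp, hderiv, hpow]
  field_simp
  ring

lemma SolvesSingularWaveEq.of_besselOp_eq {l : ℝ} {U : ℝ → ℝ → ℝ}
    (hx : ∀ x t, 0 < x → 0 < t → ContDiffAt ℝ 2 (fun y => U y t) x)
    (ht : ∀ x t, 0 < x → 0 < t → ContDiffAt ℝ 2 (fun s => U x s) t)
    (heq : ∀ x t, 0 < x → 0 < t →
      besselOp l (fun y => U y t) x = besselOp l (fun s => U x s) t)
    (hx₀ : ∀ t, 0 < t → Tendsto (fun x => U x t) (𝓝[>] 0) (𝓝 0))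
    (ht₀ : ∀ x, 0 < x → Tendsto (fun t => U x t) (𝓝[>] 0) (𝓝 0)) :
    SolvesSingularWaveEq l U := by
  have differentiableAt_deriv {f : ℝ → ℝ} {y : ℝ} (hf : ContDiffAt ℝ 2 f y) :
      DifferentiableAt ℝ (deriv f) y :=
    (hf.derivWithin one_add_one_eq_two.le).differentiableAt one_ne_zero
  refine ⟨fun x t hx' ht' => ⟨(hx x t hx' ht').differentiableAt two_ne_zero,
    differentiableAt_deriv (hx x t hx' ht'), (ht x t hx' ht').differentiableAt two_ne_zero,
    differentiableAt_deriv (ht x t hx' ht'), ?_⟩, hx₀, ht₀⟩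
  have h := heq x t hx' ht'
  simp only [besselOp, iteratedDeriv_eq_iterate, Function.iterate_succ, Function.iterate_zero,
    Function.comp_apply, id_eq] at h
  linear_combination h

/-- The coefficient of `x^{m+l+1}` in the image `Y_l[x^m]` of a monomial. -/
noncomputable def transmutedCoeff (l m : ℝ) : ℝ :=
  Real.Gamma (l + 1) * Real.Gamma ((m + 1) / 2) /
    (2 ^ (l + 3/2) * Real.Gamma (l + 3/2) * Real.Gamma (l + (m + 3) / 2))

/-- The image `φ_m = Y_l[x^m]` of a monomial under the operator `Y_l`, for `x > 0`. The exponent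
`m` is allowed to be real, so that `φ_{m-2}` needs no truncated subtraction. -/
noncomputable def transmutedPow (l m x : ℝ) : ℝ :=
  transmutedCoeff l m * x ^ (m + l + 1)

lemma transmutedCoeff_mul (l : ℝ) {m : ℝ} (hm : m ≠ 1) :
    transmutedCoeff l m * (m + 2 * l + 1) = (m - 1) * transmutedCoeff l (m - 2) := by
  have hnum : Real.Gamma ((m + 1) / 2) = (m - 1) / 2 * Real.Gamma ((m - 1) / 2) := by
    rw [← Real.Gamma_add_one (div_ne_zero (sub_ne_zero.2 hm) two_ne_zero)]
    ring_nf
  -- At the pole `l + (m + 1) / 2 = 0` both sides are `0`, as `Real.Gamma 0 = 0`.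
  have hden : (Real.Gamma (l + (m + 3) / 2))⁻¹ * (l + (m + 1) / 2) =
      (Real.Gamma (l + (m + 1) / 2))⁻¹ := by
    rcases eq_or_ne (l + (m + 1) / 2) 0 with h | h
    · simp [h]
    · rw [show l + (m + 3) / 2 = l + (m + 1) / 2 + 1 by ring, Real.Gamma_add_one h,
        mul_inv_rev, inv_mul_cancel_right₀ h]
  simp only [transmutedCoeff, div_eq_mul_inv _ (_ * _), mul_inv]
  rw [hnum, show (m - 2 + 1) / 2 = (m - 1) / 2 by ring,
    show l + (m - 2 + 3) / 2 = l + (m + 1) / 2 by ring, ← hden]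
  ring

lemma besselOp_transmutedPow (l : ℝ) {m x : ℝ} (hm : m ≠ 1) (hx : x ≠ 0) :
    besselOp l (transmutedPow l m) x = m * (m - 1) * transmutedPow l (m - 2) x := by
  unfold transmutedPow
  rw [besselOp_const_mul, besselOp_rpow hx]
  linear_combination m * x ^ (m - 2 + l + 1) * transmutedCoeff_mul l hm

lemma contDiffAt_transmutedPow (l m : ℝ) {x : ℝ} (hx : x ≠ 0) {k : WithTop ℕ∞} :
    ContDiffAt ℝ k (transmutedPow l m) x :=
  contDiffAt_const.mul (Real.contDiffAt_rpow_const_of_ne hx)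

lemma tendsto_transmutedPow_zero {l m : ℝ} (h : 0 < m + l + 1) :
    Tendsto (transmutedPow l m) (𝓝 0) (𝓝 0) := by
  have hpow := (Real.continuousAt_rpow_const 0 (m + l + 1) (Or.inr h.le)).tendsto
  rw [Real.zero_rpow h.ne'] at hpow
  unfold transmutedPow
  simpa only [mul_zero] using hpow.const_mul (transmutedCoeff l m)

lemma genWaveU4_eq_sum_transmutedPow (l : ℝ) (n : ℕ) (x t : ℝ) :
    genWaveU4 l n x t = ∑ j ∈ range (n + 1), ((2 * n).choose (2 * j) : ℝ) *
      (transmutedPow l (2 * n - 2 * j) x * transmutedPow l (2 * j) t) := by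
  have hpow : (2 : ℝ) ^ (2 * l + 3) = 2 ^ (l + 3/2) * 2 ^ (l + 3/2) := by
    rw [← Real.rpow_add two_pos]
    ring_nf
  refine sum_congr rfl fun j _ => ?_
  rw [transmutedPow, transmutedPow, transmutedCoeff, transmutedCoeff, hpow,
    show (n : ℝ) + (1 - 2 * j) / 2 = (2 * n - 2 * j + 1) / 2 by ring,
    show (n : ℝ) + l + (3 - 2 * j) / 2 = l + (2 * n - 2 * j + 3) / 2 by ring]
  simp only [div_eq_mul_inv _ (_ * _), mul_inv]
  ring

lemma genWaveU4_zero (l : ℝ) : genWaveU4 l 0 = genWaveU0 l := by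
  funext x t
  rw [genWaveU4_eq_sum_transmutedPow]
  simp only [transmutedPow, transmutedCoeff, genWaveU0, zero_add, sum_range_one, mul_zero,
    Nat.choose_self, Nat.cast_zero, Nat.cast_one, sub_zero]
  ring

lemma genWaveU4_eq_sum_transmutedPow_left (l : ℝ) (n : ℕ) (x t : ℝ) :
    genWaveU4 l n x t = ∑ j ∈ range (n + 1),
      ((2 * n).choose (2 * j) * transmutedPow l (2 * j) t) * transmutedPow l (2 * n - 2 * j) x := by
  rw [genWaveU4_eq_sum_transmutedPow]
  exact sum_congr rfl fun j _ => by ring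

lemma genWaveU4_eq_sum_transmutedPow_right (l : ℝ) (n : ℕ) (x t : ℝ) :
    genWaveU4 l n x t = ∑ j ∈ range (n + 1),
      ((2 * n).choose (2 * j) * transmutedPow l (2 * n - 2 * j) x) * transmutedPow l (2 * j) t := by
  rw [genWaveU4_eq_sum_transmutedPow]
  exact sum_congr rfl fun j _ => (mul_assoc _ _ _).symm

lemma besselOp_genWaveU4 (l : ℝ) (n : ℕ) {x t : ℝ} (hx : x ≠ 0) (ht : t ≠ 0) :
    besselOp l (fun y => genWaveU4 l n y t) x = besselOp l (fun s => genWaveU4 l n x s) t := by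
  have two_mul_ne_one (k : ℤ) : (2 * k : ℝ) ≠ 1 := by
    exact_mod_cast (by lia : 2 * k ≠ 1)
  have hx_index (j : ℕ) : (2 * n - 2 * j : ℝ) ≠ 1 := by
    simpa [mul_sub] using two_mul_ne_one (n - j)
  have ht_index (j : ℕ) : (2 * j : ℝ) ≠ 1 := two_mul_ne_one j
  calc besselOp l (fun y => genWaveU4 l n y t) x
      = ∑ j ∈ range (n + 1), ((2 * n).choose (2 * j) : ℝ) *
          ((2 * n - 2 * j) * (2 * n - 2 * j - 1) *
            (transmutedPow l (2 * n - 2 * j - 2) x * transmutedPow l (2 * j) t)) := by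
        simp only [genWaveU4_eq_sum_transmutedPow_left]
        rw [besselOp_sum_const_mul fun j _ => contDiffAt_transmutedPow l _ hx]
        refine sum_congr rfl fun j _ => ?_
        rw [besselOp_transmutedPow l (hx_index j) hx]
        ring
    _ = ∑ j ∈ range (n + 1), ((2 * n).choose (2 * j) : ℝ) *
          (2 * j * (2 * j - 1) *
            (transmutedPow l (2 * n - 2 * j) x * transmutedPow l (2 * j - 2) t)) :=
        sum_choose_two_mul_shift (fun a b => transmutedPow l a x * transmutedPow l b t) n
    _ = besselOp l (fun s => genWaveU4 l n x s) t := by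
        simp only [genWaveU4_eq_sum_transmutedPow_right]
        rw [besselOp_sum_const_mul fun j _ => contDiffAt_transmutedPow l _ ht]
        refine sum_congr rfl fun j _ => ?_
        rw [besselOp_transmutedPow l (ht_index j) ht]
        ring

lemma tendsto_sum_const_mul_transmutedPow {ι : Type*} {s : Finset ι} {l : ℝ} {m : ι → ℝ}
    (hl : -1 < l) (hm : ∀ i ∈ s, 0 ≤ m i) (c : ι → ℝ) :
    Tendsto (fun x => ∑ i ∈ s, c i * transmutedPow l (m i) x) (𝓝 0) (𝓝 0) := by
  have h : Tendsto (fun x => ∑ i ∈ s, c i * transmutedPow l (m i) x) (𝓝 0)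
      (𝓝 (∑ i ∈ s, c i * 0)) :=
    tendsto_finsetSum s fun i hi =>
      (tendsto_transmutedPow_zero (by linarith [hm i hi])).const_mul (c i)
  simpa only [mul_zero, sum_const_zero] using h

lemma solvesSingularWaveEq_genWaveU4 {l : ℝ} (hl : -1 < l) (n : ℕ) :
    SolvesSingularWaveEq l (genWaveU4 l n) := by
  refine .of_besselOp_eq (fun x t hx _ => ?_) (fun x t _ ht => ?_)
    (fun x t hx ht => besselOp_genWaveU4 l n hx.ne' ht.ne') (fun t _ => ?_) (fun x _ => ?_)
  · simp only [genWaveU4_eq_sum_transmutedPow_left]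
    exact .sum fun j _ => contDiffAt_const.mul (contDiffAt_transmutedPow l _ hx.ne')
  · simp only [genWaveU4_eq_sum_transmutedPow_right]
    exact .sum fun j _ => contDiffAt_const.mul (contDiffAt_transmutedPow l _ ht.ne')
  · simp only [genWaveU4_eq_sum_transmutedPow_left]
    refine (tendsto_sum_const_mul_transmutedPow hl (fun j hj => ?_) _).mono_left nhdsWithin_le_nhds
    have hjn : (j : ℝ) ≤ n := by exact_mod_cast mem_range_succ_iff.1 hj
    linarith
  · simp only [genWaveU4_eq_sum_transmutedPow_right]
    exact (tendsto_sum_const_mul_transmutedPow hl (fun j _ => by positivity) _).mono_left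
      nhdsWithin_le_nhds

theorem stmt_12_general (l : ℝ) (hl : -1 < l) :
    SolvesSingularWaveEq l (genWaveU0 l) ∧ ∀ n : ℕ, SolvesSingularWaveEq l (genWaveU4 l n) :=
  ⟨genWaveU4_zero l ▸ solvesSingularWaveEq_genWaveU4 hl 0, solvesSingularWaveEq_genWaveU4 hl⟩

/-- All the generalized wave polynomials `U₀` and `U_{4n-1}`, `n ≥ 1`,
solve the singular hyperbolic equation and satisfy the boundary conditions
`U(0⁺,t) = 0` and `U(x,0⁺) = 0`. -/
theorem stmt_12 (l : ℝ) (hl : -(1/2) ≤ l) :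
    SolvesSingularWaveEq l (genWaveU0 l) ∧
    ∀ n : ℕ, 1 ≤ n → SolvesSingularWaveEq l (genWaveU4 l n) := by
  obtain ⟨h₀, h⟩ := stmt_12_general l (by linarith)
  exact ⟨h₀, fun n _ => h n⟩
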